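/- arXiv:1911.02942 — 3 statements merged into one kernel-verified Lean document; each statement's English description precedes it below -/
import Mathlib

section
/- Let ν > 0 and let φ : ℝ × ℝ → ℝ (arguments (x,t)) be smooth, everywhere strictly positive, and satisfy the heat equation ∂φ/∂t = ν ∂²φ/∂x². Then the function u(x,t) = -2ν (∂φ/∂x)(x,t) / φ(x,t) satisfies the viscous Burgers equation ∂u/∂t + u ∂u/∂x = ν ∂²u/∂x² at every point (x,t). -/
open Real

/-!
Work with the logarithmic derivative `w = φ_x / φ`, so that `u = -2ν w`. Formally `w = (log φ)_x`,
hence `w_t = (φ_t / φ)_x` by symmetry of second derivatives. The quotient rule gives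
`φ_xx / φ = w_x + w²`, so the heat equation turns this into `w_t = ν (w_x + w²)_x`, which is the
Burgers equation up to the factor `-2ν`.
-/

open Filter
open scoped Topology

section Slices

variable {𝕜 E F : Type*} [NontriviallyNormedField 𝕜] [NormedAddCommGroup E] [NormedSpace 𝕜 E]
  [NormedAddCommGroup F] [NormedSpace 𝕜 F]

theorem hasDerivAt_slice_fst {f : 𝕜 × E → F} {x : 𝕜} {t : E} (hf : DifferentiableAt 𝕜 f (x, t)) :
    HasDerivAt (fun y => f (y, t)) (fderiv 𝕜 f (x, t) (1, 0)) x :=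
  hf.hasFDerivAt.comp_hasDerivAt x ((hasDerivAt_id x).prodMk (hasDerivAt_const x t))

theorem hasDerivAt_slice_snd {f : E × 𝕜 → F} {x : E} {t : 𝕜} (hf : DifferentiableAt 𝕜 f (x, t)) :
    HasDerivAt (fun s => f (x, s)) (fderiv 𝕜 f (x, t) (0, 1)) t :=
  hf.hasFDerivAt.comp_hasDerivAt t ((hasDerivAt_const t x).prodMk (hasDerivAt_id t))

theorem differentiableAt_fderiv_of_contDiffAt_two {g : E → F} {p : E} (hg : ContDiffAt 𝕜 2 g p) :
    DifferentiableAt 𝕜 (fderiv 𝕜 g) p :=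
  (hg.fderiv_right (m := 1) (by norm_num)).differentiableAt (by simp)

variable {f : 𝕜 × 𝕜 → F} {x t : 𝕜}

theorem hasDerivAt_deriv_slice_fst (hf : ContDiffAt 𝕜 2 f (x, t)) :
    HasDerivAt (fun s => deriv (fun y => f (y, s)) x)
      (fderiv 𝕜 (fderiv 𝕜 f) (x, t) (0, 1) (1, 0)) t := by
  have hslice : (fun s => deriv (fun y => f (y, s)) x)
      =ᶠ[𝓝 t] fun s => fderiv 𝕜 f (x, s) (1, 0) :=
    ((by fun_prop : ContinuousAt (fun s => (x, s)) t).eventually (hf.eventually (by simp))).mono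
      fun _ hs => (hasDerivAt_slice_fst (hs.differentiableAt (by simp))).deriv
  have hderiv := (hasDerivAt_slice_snd (differentiableAt_fderiv_of_contDiffAt_two hf)).clm_apply
    (hasDerivAt_const t ((1, 0) : 𝕜 × 𝕜))
  simpa only [map_zero, add_zero] using hderiv.congr_of_eventuallyEq hslice

theorem hasDerivAt_deriv_slice_snd (hf : ContDiffAt 𝕜 2 f (x, t)) :
    HasDerivAt (fun y => deriv (fun s => f (y, s)) t)
      (fderiv 𝕜 (fderiv 𝕜 f) (x, t) (1, 0) (0, 1)) x := by
  have hslice : (fun y => deriv (fun s => f (y, s)) t)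
      =ᶠ[𝓝 x] fun y => fderiv 𝕜 f (y, t) (0, 1) :=
    ((by fun_prop : ContinuousAt (fun y => (y, t)) x).eventually (hf.eventually (by simp))).mono
      fun _ hy => (hasDerivAt_slice_snd (hy.differentiableAt (by simp))).deriv
  have hderiv := (hasDerivAt_slice_fst (differentiableAt_fderiv_of_contDiffAt_two hf)).clm_apply
    (hasDerivAt_const x ((0, 1) : 𝕜 × 𝕜))
  simpa only [map_zero, add_zero] using hderiv.congr_of_eventuallyEq hslice

end Slices

section LogDeriv

variable {𝕜 𝕜' : Type*} [NontriviallyNormedField 𝕜] [NontriviallyNormedField 𝕜']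
  [NormedAlgebra 𝕜 𝕜']

theorem hasDerivAt_logDeriv {g : 𝕜 → 𝕜'} {x : 𝕜} (hg : DifferentiableAt 𝕜 g x)
    (hg' : DifferentiableAt 𝕜 (deriv g) x) (hx : g x ≠ 0) :
    HasDerivAt (logDeriv g) (deriv (deriv g) x / g x - logDeriv g x ^ 2) x := by
  have hquot : HasDerivAt (logDeriv g) _ x := hg'.hasDerivAt.div hg.hasDerivAt hx
  convert hquot using 1
  rw [logDeriv_apply]
  field_simp

variable {f : 𝕜 × 𝕜 → 𝕜'} {x t : 𝕜}

theorem hasDerivAt_logDeriv_slice_snd (hf : ContDiffAt 𝕜 (minSmoothness 𝕜 2) f (x, t))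
    (hne : f (x, t) ≠ 0) :
    HasDerivAt (fun y => logDeriv (fun s => f (y, s)) t)
      (deriv (fun s => logDeriv (fun y => f (y, s)) x) t) x := by
  have hf₂ : ContDiffAt 𝕜 2 f (x, t) := hf.of_le le_minSmoothness
  have hdiff : DifferentiableAt 𝕜 f (x, t) := hf₂.differentiableAt (by simp)
  have hsymm := (hf.isSymmSndFDerivAt le_rfl).eq (1, 0) (0, 1)
  have hfst := hasDerivAt_slice_fst hdiff
  have hsnd := hasDerivAt_slice_snd hdiff
  have ht := (hasDerivAt_deriv_slice_fst hf₂).fun_div hsnd hne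
  have hx := (hasDerivAt_deriv_slice_snd hf₂).fun_div hfst hne
  simp only [logDeriv_apply, ht.deriv]
  convert hx using 1
  rw [hsymm, hfst.deriv, hsnd.deriv, mul_comm (fderiv 𝕜 f (x, t) (1, 0))]

theorem deriv_logDeriv_of_heat {ν : 𝕜'} (hf : ContDiffAt 𝕜 (minSmoothness 𝕜 2) f (x, t))
    (hne : f (x, t) ≠ 0)
    (heat : ∀ᶠ y in 𝓝 x,
      deriv (fun s => f (y, s)) t = ν * deriv (deriv fun z => f (z, t)) y) :
    deriv (fun s => logDeriv (fun y => f (y, s)) x) t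
      = ν * (deriv (deriv (logDeriv fun y => f (y, t))) x
        + 2 * logDeriv (fun y => f (y, t)) x * deriv (logDeriv fun y => f (y, t)) x) := by
  set w := logDeriv fun y => f (y, t)
  have hslice : ContDiffAt 𝕜 2 (fun y => f (y, t)) x :=
    (hf.of_le le_minSmoothness).comp x (contDiffAt_id.prodMk contDiffAt_const)
  have hw : ∀ᶠ y in 𝓝 x,
      HasDerivAt w (deriv (deriv fun z => f (z, t)) y / f (y, t) - w y ^ 2) y := by
    filter_upwards [hslice.eventually (by simp), hslice.continuousAt.eventually_ne hne]
      with y hy hy_ne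
    exact hasDerivAt_logDeriv (hy.differentiableAt (by simp))
      ((differentiableAt_fderiv_of_contDiffAt_two hy).clm_apply (differentiableAt_const 1)) hy_ne
  have hw_x : HasDerivAt w (deriv w x) x := hw.self_of_nhds.differentiableAt.hasDerivAt
  have hriccati : (fun y => ν * deriv w y)
      =ᶠ[𝓝 x] fun y => logDeriv (fun s => f (y, s)) t - ν * w y ^ 2 := by
    filter_upwards [hw, heat] with y hy hy_heat
    rw [hy.deriv, logDeriv_apply (fun s => f (y, s)), hy_heat]
    ring
  -- `f` need not have a third derivative: `ν w_x` is differentiable because, by `hriccati`,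
  -- it involves only first derivatives of `f`.
  have hw_xx : ν * deriv (deriv w) x
      = deriv (fun s => logDeriv (fun y => f (y, s)) x) t - ν * (2 * w x * deriv w x) := by
    rw [← deriv_const_mul_field, hriccati.deriv_eq]
    simpa using ((hasDerivAt_logDeriv_slice_snd hf hne).fun_sub
      ((hw_x.fun_pow 2).const_mul ν)).deriv
  rw [mul_add, hw_xx, sub_add_cancel]

theorem cole_hopf_burgers_general {ν : 𝕜'} (hf : ContDiffAt 𝕜 (minSmoothness 𝕜 2) f (x, t))
    (hne : f (x, t) ≠ 0)
    (heat : ∀ᶠ y in 𝓝 x,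
      deriv (fun s => f (y, s)) t = ν * deriv (fun z => deriv (fun w => f (w, t)) z) y) :
    deriv (fun s => -2 * ν * deriv (fun y => f (y, s)) x / f (x, s)) t
      + (-2 * ν * deriv (fun y => f (y, t)) x / f (x, t))
        * deriv (fun y => -2 * ν * deriv (fun z => f (z, t)) y / f (y, t)) x
    = ν * deriv (fun y =>
        deriv (fun z => -2 * ν * deriv (fun w => f (w, t)) z / f (z, t)) y) x := by
  simp only [mul_div_assoc, ← logDeriv_apply, deriv_const_mul_field]
  rw [deriv_logDeriv_of_heat hf hne heat]
  ring

end LogDeriv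

/-- Cole–Hopf transformation: if `φ > 0` is smooth and solves the heat equation
`φ_t = ν φ_xx`, then `u = -2ν φ_x / φ` solves the viscous Burgers equation
`u_t + u u_x = ν u_xx` at every point. -/
theorem cole_hopf_burgers
    (ν : ℝ) (hν : 0 < ν) (φ : ℝ → ℝ → ℝ)
    (hφ : ContDiff ℝ (⊤ : ℕ∞) (fun p : ℝ × ℝ => φ p.1 p.2))
    (hpos : ∀ x t : ℝ, 0 < φ x t)
    (heat : ∀ x t : ℝ,
      deriv (fun s => φ x s) t = ν * deriv (fun y => deriv (fun z => φ z t) y) x) :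
    ∀ x t : ℝ,
      deriv (fun s => -2 * ν * deriv (fun y => φ y s) x / φ x s) t
        + (-2 * ν * deriv (fun y => φ y t) x / φ x t)
          * deriv (fun y => -2 * ν * deriv (fun z => φ z t) y / φ y t) x
      = ν * deriv (fun y =>
          deriv (fun z => -2 * ν * deriv (fun w => φ w t) z / φ z t) y) x := by
  intro x t
  have hφ₂ : ContDiff ℝ (minSmoothness ℝ 2) fun p : ℝ × ℝ => φ p.1 p.2 := by
    simpa only [minSmoothness_of_isRCLikeNormedField, Nat.cast_ofNat] using
      contDiff_infty.1 hφ 2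
  exact cole_hopf_burgers_general hφ₂.contDiffAt (hpos x t).ne' (.of_forall fun y => heat y t)
end

section
/- Let R > 0 and set ν = 1/R. Define g(x,y,t) = 1 / (1 + e^{R(4y - 4x - t)/32}), u(x,y,t) = 3/4 - g(x,y,t)/4 and v(x,y,t) = 3/4 + g(x,y,t)/4. Then at every (x,y,t) ∈ ℝ³ the pair (u,v) satisfies the coupled system ∂u/∂t + u ∂u/∂x + v ∂u/∂y = ν (∂²u/∂x² + ∂²u/∂y²) and ∂v/∂t + u ∂v/∂x + v ∂v/∂y = ν (∂²v/∂x² + ∂²v/∂y²). -/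
open Real

/-- The auxiliary function of the exact solution of Li et al. -/
noncomputable def coupledG (R x y t : ℝ) : ℝ :=
  1 / (1 + Real.exp (R * (4 * y - 4 * x - t) / 32))

/-- First component of the exact solution of the coupled 2D Burgers system. -/
noncomputable def coupledU (R x y t : ℝ) : ℝ :=
  3 / 4 - coupledG R x y t / 4

/-- Second component of the exact solution of the coupled 2D Burgers system. -/
noncomputable def coupledV (R x y t : ℝ) : ℝ :=
  3 / 4 + coupledG R x y t / 4

/-! Both components are affine functions of a single planar wave `w = f (k x + l y + m t)`, and for
a fixed velocity field the equation is linear in the transported function, so it is enough that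
`w` is transported by `(u, v)`. Along the wave this is the ODE
`(m + k u + l v) f' = ν (k² + l²) f''`. The sigmoid satisfies `f'' = (1 - 2 f) f'`, so cancelling
`f'` leaves an identity between two affine functions of `f`: two scalar conditions on the speed and
the amplitudes. -/

/-- The advection–diffusion equation `w_t + u w_x + v w_y = ν (w_xx + w_yy)` for `w` in the velocity
field `(u, v)`. Functions take their arguments in the order `x`, `y`, `t`; the partial derivatives
are values of `deriv`, so differentiability is not part of the predicate. -/
def IsAdvectionDiffusionSolution (ν : ℝ) (u v w : ℝ → ℝ → ℝ → ℝ) : Prop :=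
  ∀ x y t : ℝ,
    deriv (fun s => w x y s) t
        + u x y t * deriv (fun a => w a y t) x
        + v x y t * deriv (fun b => w x b t) y
      = ν * (deriv (fun a => deriv (fun a' => w a' y t) a) x
          + deriv (fun b => deriv (fun b' => w x b' t) b) y)

/-- The coupled viscous Burgers system with viscosity `ν`, as advection–diffusion of each velocity
component by the velocity field itself. -/
def IsCoupledBurgersSolution (ν : ℝ) (u v : ℝ → ℝ → ℝ → ℝ) : Prop :=
  IsAdvectionDiffusionSolution ν u v u ∧ IsAdvectionDiffusionSolution ν u v v

/-- The planar wave with profile `f`, wave vector `(k, l)` and temporal frequency `m`. -/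
def planarWave (f : ℝ → ℝ) (k l m x y t : ℝ) : ℝ :=
  f (k * x + l * y + m * t)

lemma deriv_comp_const_add_mul (f : ℝ → ℝ) (c k a : ℝ) :
    deriv (fun s => f (c + k * s)) a = k * deriv f (c + k * a) := by
  rw [deriv_comp_mul_left k (fun s => f (c + s)), deriv_comp_const_add, smul_eq_mul]

section PlanarWave

variable (f : ℝ → ℝ) (k l m x y t : ℝ)

lemma deriv_planarWave_x :
    deriv (fun a => planarWave f k l m a y t) x = k * planarWave (deriv f) k l m x y t := by
  simpa only [planarWave, add_comm (l * y + m * t), ← add_assoc] using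
    deriv_comp_const_add_mul f (l * y + m * t) k x

lemma deriv_planarWave_y :
    deriv (fun b => planarWave f k l m x b t) y = l * planarWave (deriv f) k l m x y t := by
  simpa only [planarWave, add_right_comm] using deriv_comp_const_add_mul f (k * x + m * t) l y

lemma deriv_planarWave_t :
    deriv (fun s => planarWave f k l m x y s) t = m * planarWave (deriv f) k l m x y t :=
  deriv_comp_const_add_mul f (k * x + l * y) m t

end PlanarWave

lemma IsAdvectionDiffusionSolution.const_add_const_mul {ν : ℝ} {u v w : ℝ → ℝ → ℝ → ℝ}
    (hw : IsAdvectionDiffusionSolution ν u v w) (a b : ℝ) :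
    IsAdvectionDiffusionSolution ν u v fun x y t => a + b * w x y t := by
  intro x y t
  simp only [deriv_const_add, deriv_const_mul_field]
  linear_combination b * hw x y t

lemma isAdvectionDiffusionSolution_planarWave {ν k l m : ℝ} {f : ℝ → ℝ} {u v : ℝ → ℝ → ℝ → ℝ}
    (hf : ∀ x y t, (m + k * u x y t + l * v x y t) * planarWave (deriv f) k l m x y t
      = ν * (k ^ 2 + l ^ 2) * planarWave (deriv (deriv f)) k l m x y t) :
    IsAdvectionDiffusionSolution ν u v (planarWave f k l m) := by
  intro x y t
  simp only [deriv_planarWave_x, deriv_planarWave_y, deriv_planarWave_t, deriv_const_mul_field]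
  linear_combination hf x y t

lemma deriv_deriv_sigmoid (z : ℝ) :
    deriv (deriv sigmoid) z = (1 - 2 * sigmoid z) * deriv sigmoid z := by
  have h := hasDerivAt_sigmoid z
  rw [deriv_sigmoid, (h.fun_mul (h.const_sub 1)).deriv]
  ring

lemma isCoupledBurgersSolution_sigmoid_planarWave {ν k l m a b c d : ℝ}
    (hspeed : m + k * a + l * c = ν * (k ^ 2 + l ^ 2))
    (hamplitude : k * b + l * d = -2 * ν * (k ^ 2 + l ^ 2)) :
    IsCoupledBurgersSolution ν
      (fun x y t => a + b * planarWave sigmoid k l m x y t)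
      (fun x y t => c + d * planarWave sigmoid k l m x y t) := by
  have hwave : IsAdvectionDiffusionSolution ν
      (fun x y t => a + b * planarWave sigmoid k l m x y t)
      (fun x y t => c + d * planarWave sigmoid k l m x y t)
      (planarWave sigmoid k l m) := by
    refine isAdvectionDiffusionSolution_planarWave fun x y t => ?_
    simp only [planarWave, deriv_deriv_sigmoid]
    set z := k * x + l * y + m * t
    linear_combination (hspeed + sigmoid z * hamplitude) * deriv sigmoid z
  exact ⟨hwave.const_add_const_mul a b, hwave.const_add_const_mul c d⟩

lemma coupledG_eq_planarWave (R : ℝ) :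
    coupledG R = planarWave sigmoid (R / 8) (-(R / 8)) (R / 32) := by
  funext x y t
  rw [coupledG, planarWave, sigmoid_def, one_div]
  ring_nf

lemma coupledU_eq_planarWave (R : ℝ) :
    coupledU R = fun x y t =>
      3 / 4 + -1 / 4 * planarWave sigmoid (R / 8) (-(R / 8)) (R / 32) x y t := by
  funext x y t
  rw [coupledU, coupledG_eq_planarWave]
  ring

lemma coupledV_eq_planarWave (R : ℝ) :
    coupledV R = fun x y t =>
      3 / 4 + 1 / 4 * planarWave sigmoid (R / 8) (-(R / 8)) (R / 32) x y t := by
  funext x y t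
  rw [coupledV, coupledG_eq_planarWave]
  ring

/-- For `R > 0` and `ν = 1/R`, the pair `u = 3/4 - g/4`, `v = 3/4 + g/4` with
`g(x,y,t) = 1/(1 + e^{R(4y-4x-t)/32})` satisfies the coupled two-dimensional
viscous Burgers system at every point. -/
theorem coupled_burgers_exact_solution (R : ℝ) (hR : 0 < R) :
    ∀ x y t : ℝ,
      (deriv (fun s => coupledU R x y s) t
          + coupledU R x y t * deriv (fun a => coupledU R a y t) x
          + coupledV R x y t * deriv (fun b => coupledU R x b t) y
        = (1 / R) *
            (deriv (fun a => deriv (fun a' => coupledU R a' y t) a) x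
              + deriv (fun b => deriv (fun b' => coupledU R x b' t) b) y))
      ∧
      (deriv (fun s => coupledV R x y s) t
          + coupledU R x y t * deriv (fun a => coupledV R a y t) x
          + coupledV R x y t * deriv (fun b => coupledV R x b t) y
        = (1 / R) *
            (deriv (fun a => deriv (fun a' => coupledV R a' y t) a) x
              + deriv (fun b => deriv (fun b' => coupledV R x b' t) b) y)) := by
  have hsol : IsCoupledBurgersSolution (1 / R) (coupledU R) (coupledV R) := by
    rw [coupledU_eq_planarWave, coupledV_eq_planarWave]
    have hspeed : R / 32 + R / 8 * (3 / 4) + -(R / 8) * (3 / 4)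
        = 1 / R * ((R / 8) ^ 2 + (-(R / 8)) ^ 2) := by field_simp; norm_num
    have hamplitude : R / 8 * (-1 / 4) + -(R / 8) * (1 / 4)
        = -2 * (1 / R) * ((R / 8) ^ 2 + (-(R / 8)) ^ 2) := by field_simp; norm_num
    exact isCoupledBurgersSolution_sigmoid_planarWave hspeed hamplitude
  exact fun x y t => ⟨hsol.1 x y t, hsol.2 x y t⟩
end

section
/- Let x₁, …, x_M be M ≥ 2 pairwise distinct real numbers and let A be the M × M real matrix with entries a_ij = Q_i / ((x_i - x_j) Q_j) for i ≠ j and a_ii = -∑_{j ≠ i} a_ij, where Q_i = ∏_{k ≠ i}(x_i - x_k). Then for every m ≥ 1, every real polynomial p with deg p ≤ M - 1 and every i, the i-th entry of A^m applied to the vector (p(x₁), …, p(x_M)) equals the m-th derivative p^{(m)}(x_i). -/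
/-!
The weight `a_ij` is the derivative at `x_i` of the `j`-th Lagrange basis polynomial: the
off-diagonal formula comes from differentiating the product, and the diagonal one from the fact
that the basis polynomials sum to `1`. A polynomial of degree less than the number of nodes is its
own Lagrange interpolant, so `A` maps its values to those of its derivative. The derivative is again
of small degree, and the argument iterates.
-/

section DifferentiationMatrix

open Finset Polynomial Matrix

variable {F ι : Type*} [Field F] [DecidableEq ι]

theorem eval_derivative_basis_of_ne {s : Finset ι} {v : ι → F} {i j : ι} (hi : i ∈ s) (hj : j ∈ s)
    (hij : v i ≠ v j) :
    (derivative (Lagrange.basis s v j)).eval (v i) =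
      (∏ k ∈ s.erase i, (v i - v k)) / ((v i - v j) * ∏ k ∈ s.erase j, (v j - v k)) := by
  have ne : i ≠ j := ne_of_apply_ne v hij
  have sub_ne : v i - v j ≠ 0 := sub_ne_zero.mpr hij
  have split_factor : (v i - v j) * ∏ k ∈ (s.erase j).erase i, (v i - v k) =
      ∏ k ∈ s.erase i, (v i - v k) := by
    rw [erase_right_comm]
    exact mul_prod_erase _ (fun k => v i - v k) (mem_erase.mpr ⟨ne.symm, hj⟩)
  rw [Lagrange.basis_eq_prod_sub_inv_mul_nodal_div hj, ← Lagrange.nodal_erase_eq_nodal_div hj,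
    derivative_C_mul, eval_C_mul,
    Lagrange.eval_nodal_derivative_eval_node_eq (mem_erase.mpr ⟨ne, hi⟩), Lagrange.eval_nodal,
    Lagrange.nodalWeight, prod_inv_distrib, ← split_factor, mul_div_mul_left _ _ sub_ne,
    inv_mul_eq_div]

variable [Fintype ι]

/-- The first-derivative weighting matrix on the nodes `v`: it sends the values of a function at the
nodes to those of the derivative of its Lagrange interpolant. The weights are encoded as derivatives
of the Lagrange basis polynomials rather than by their explicit formulas. -/
noncomputable def differentiationMatrix (v : ι → F) : Matrix ι ι F :=
  of fun i j => (derivative (Lagrange.basis univ v j)).eval (v i)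

variable {v : ι → F}

theorem sum_differentiationMatrix_row_eq_zero (hv : Function.Injective v) (i : ι) :
    ∑ j, differentiationMatrix v i j = 0 := by
  simp only [differentiationMatrix, of_apply]
  rw [← eval_finsetSum, ← derivative_sum, Lagrange.sum_basis hv.injOn ⟨i, mem_univ i⟩,
    derivative_one, eval_zero]

theorem eq_differentiationMatrix (hv : Function.Injective v) {A : Matrix ι ι F}
    (hA_off : ∀ i j, i ≠ j →
      A i j = (∏ k ∈ univ.erase i, (v i - v k)) /
        ((v i - v j) * ∏ k ∈ univ.erase j, (v j - v k)))
    (hA_diag : ∀ i, A i i = -∑ j ∈ univ.erase i, A i j) :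
    A = differentiationMatrix v := by
  have off_diag (i j : ι) (hij : i ≠ j) : A i j = differentiationMatrix v i j :=
    (hA_off i j hij).trans
      (eval_derivative_basis_of_ne (mem_univ i) (mem_univ j) (hv.ne hij)).symm
  ext i j
  obtain rfl | hij := eq_or_ne i j
  · rw [hA_diag, sum_congr rfl fun j hj => off_diag i j (ne_of_mem_erase hj).symm]
    refine neg_eq_of_add_eq_zero_left ?_
    rw [add_sum_erase _ _ (mem_univ i), sum_differentiationMatrix_row_eq_zero hv]
  · exact off_diag i j hij

theorem differentiationMatrix_mulVec_eval (hv : Function.Injective v) {p : F[X]}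
    (hp : p.degree < Fintype.card ι) :
    differentiationMatrix v *ᵥ (fun j => p.eval (v j)) = fun i => (derivative p).eval (v i) := by
  ext i
  have interpolation : p = ∑ j, C (p.eval (v j)) * Lagrange.basis univ v j :=
    Lagrange.eq_interpolate hv.injOn hp
  conv_rhs => rw [interpolation]
  simp only [mulVec, dotProduct, differentiationMatrix, of_apply, derivative_sum,
    derivative_C_mul, eval_finsetSum, eval_C_mul]
  exact sum_congr rfl fun j _ => mul_comm _ _

theorem differentiationMatrix_pow_mulVec_eval (hv : Function.Injective v) (m : ℕ) {p : F[X]}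
    (hp : p.degree < Fintype.card ι) :
    (differentiationMatrix v ^ m) *ᵥ (fun j => p.eval (v j)) =
      fun i => (derivative^[m] p).eval (v i) := by
  induction m generalizing p with
  | zero => rw [pow_zero, one_mulVec, Function.iterate_zero_apply]
  | succ m ih =>
    rw [pow_succ, ← mulVec_mulVec, differentiationMatrix_mulVec_eval hv hp,
      ih (degree_derivative_le.trans_lt hp), Function.iterate_succ_apply]

theorem gdqm_matrix_power_exact_general (hv : Function.Injective v) (A : Matrix ι ι F)
    (hA_off : ∀ i j, i ≠ j →
      A i j = (∏ k ∈ univ.erase i, (v i - v k)) /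
        ((v i - v j) * ∏ k ∈ univ.erase j, (v j - v k)))
    (hA_diag : ∀ i, A i i = -∑ j ∈ univ.erase i, A i j)
    (m : ℕ) {p : F[X]} (hp : p.degree < Fintype.card ι) (i : ι) :
    ((A ^ m) *ᵥ fun j => p.eval (v j)) i = (derivative^[m] p).eval (v i) := by
  rw [eq_differentiationMatrix hv hA_off hA_diag, differentiationMatrix_pow_mulVec_eval hv m hp]

end DifferentiationMatrix

/-- Matrix powers of the GDQM first-derivative weighting matrix differentiate
polynomials of degree `≤ M - 1` exactly at the nodes: for every `m ≥ 1`,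
`(A^m · (p(x₁), …, p(x_M)))_i = p^{(m)}(x_i)`. -/
theorem gdqm_matrix_power_exact (M : ℕ) (hM : 2 ≤ M)
    (x : Fin M → ℝ) (hx : Function.Injective x)
    (A : Matrix (Fin M) (Fin M) ℝ)
    (hA_off : ∀ i j, i ≠ j →
      A i j = (∏ k ∈ Finset.univ.erase i, (x i - x k))
        / ((x i - x j) * ∏ k ∈ Finset.univ.erase j, (x j - x k)))
    (hA_diag : ∀ i, A i i = -∑ j ∈ Finset.univ.erase i, A i j) :
    ∀ m : ℕ, 1 ≤ m → ∀ p : Polynomial ℝ, p.natDegree ≤ M - 1 → ∀ i,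
      (A ^ m).mulVec (fun j => p.eval (x j)) i
        = ((⇑Polynomial.derivative)^[m] p).eval (x i) := by
  intro m _ p hp i
  have natDegree_lt : p.natDegree < Fintype.card (Fin M) := by
    rw [Fintype.card_fin]
    omega
  exact gdqm_matrix_power_exact_general hx A hA_off hA_diag m
    (Polynomial.degree_le_natDegree.trans_lt (Nat.cast_lt.mpr natDegree_lt)) i
end
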